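/- arXiv:2107.02853 — 2 statements merged into one kernel-verified Lean document; each statement's English description precedes it below -/
import Mathlib

section
/- Let 0<A₀<1 and λ∈[A₀, A₀^{−1}], let ω be Diophantine of class τ≥1 and constant ν>0, let ρ>0, and let ϑ∈A_ρ have zero average ∫_𝕋 ϑ(θ) dθ = 0. Then there exists one, and only one, solution φ with zero average ∫_𝕋 φ(θ) dθ = 0 of the equation φ(θ+ω) − λ φ(θ) = ϑ(θ). Moreover, for 0<δ<ρ, if φ∈A_{ρ−δ}, then ‖φ‖_{ρ−δ} ≤ C₀ ν^{−1} δ^{−τ} ‖ϑ‖_ρ, where C₀ = (2π)^{−τ} · π/(2^τ (1+λ)) · √(Γ(2τ+1)/3) and Γ denotes the gamma function. -/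
/-!
On Fourier coefficients the equation reads `φ_k (e^{2πikω} - λ) = ϑ_k`. The Diophantine condition
makes every divisor with `k ≠ 0` nonzero, and the mode `k = 0` is fixed by the averages, so a
solution is determined by its coefficients; existence amounts to summability of `ϑ_k / (divisor)`.

The norm estimate with the sharp exponent `τ` is Rüssmann's argument. By Cauchy's theorem the
coefficients of `ϑ` on the lines `Im z = ±ρ` are `ϑ_k e^{∓2πkρ}` (`cf_strip`), so Bessel's inequality
on these two lines gives `∑ |ϑ_k|² e^{4π|k|ρ} ≤ 2 ‖ϑ‖_ρ²` (`sum_weighted_coeff_le`). By Cauchy–Schwarz,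
for `|Im z| ≤ ρ - δ` it remains to bound `∑ e^{-4π|k|δ} / |e^{2πikω} - λ|²`. Here
`|e^{2πikω} - λ| ≥ (1 + λ) |sin πkω| ≥ 2 (1 + λ) dist(kω, ℤ)` (`divisor_lower`). The points `kω mod 1`,
`k ≤ n`, are `ν n^{-τ}`-separated from each other and from `0`, so
`∑_{k ≤ n} dist(kω, ℤ)⁻² ≤ 2 ζ(2) ν⁻² n^{2τ}` (`russmann_sum`), and summation by parts turns this into
the factor `(4πδ)^{-2τ} Γ(2τ + 1)` (`laplace_sum`).

The same bound on the real axis yields the summability needed for existence. For a solution in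
`A_{ρ-δ}` the argument is run on each horizontal line separately, where the coefficients are read off
from the equation.
-/


open Complex

noncomputable section

/-- The complex strip of half-width `ρ` around the real axis, a fundamental
domain model for the complexified torus `𝕋_ρ ⊂ ℂ/ℤ`. -/
def strip (ρ : ℝ) : Set ℂ := {z : ℂ | |z.im| ≤ ρ}

/-- `f ∈ A_ρ`: `f` is `1`-periodic (i.e. a function on `ℂ/ℤ`), analytic in the
interior of the strip `𝕋_ρ` and continuous up to its boundary. -/
def MemA (ρ : ℝ) (f : ℂ → ℂ) : Prop :=
  (∀ z : ℂ, f (z + 1) = f z) ∧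
    DifferentiableOn ℂ f (interior (strip ρ)) ∧ ContinuousOn f (strip ρ)

/-- The sup norm `‖f‖_ρ` over the strip `𝕋_ρ`. -/
def supNorm (ρ : ℝ) (f : ℂ → ℂ) : ℝ := sSup ((fun z => ‖f z‖) '' strip ρ)

/-- `ω` is Diophantine of class `τ` and constant `ν`:
`|ωk - q| ≥ ν |k|^{-τ}` for all `q ∈ ℤ`, `k ∈ ℤ \ {0}`. -/
def IsDiophantine (ν τ ω : ℝ) : Prop :=
  ∀ q k : ℤ, k ≠ 0 → ν * |(k : ℝ)| ^ (-τ) ≤ |ω * (k : ℝ) - (q : ℝ)|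

/-! ### Rüssmann's estimate for sums of inverse squared divisors -/

/-- The integers `⌊xᵢ/ε⌋` are distinct and positive, so the sum is at most `ε⁻² ζ(2)`. -/
lemma pos_sum_bound {ι : Type*} (P : Finset ι) (x : ι → ℝ) (ε : ℝ) (hε : 0 < ε)
    (hx : ∀ i ∈ P, ε ≤ x i) (hsep : ∀ i ∈ P, ∀ j ∈ P, i ≠ j → ε ≤ |x i - x j|) :
    ∑ i ∈ P, 1 / (x i) ^ 2 ≤ 1 / ε ^ 2 * (Real.pi ^ 2 / 6) := by
  have hinj : Set.InjOn (fun i => ⌊x i / ε⌋₊) P := by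
    intro i hi j hj hij
    by_contra hne
    have h1 := hsep i hi j hj hne
    have hi0 : 0 ≤ x i / ε := div_nonneg (hε.le.trans (hx i hi)) hε.le
    have hj0 : 0 ≤ x j / ε := div_nonneg (hε.le.trans (hx j hj)) hε.le
    have a1 := Nat.floor_le hi0
    have a2 := Nat.lt_floor_add_one (x i / ε)
    have b1 := Nat.floor_le hj0
    have b2 := Nat.lt_floor_add_one (x j / ε)
    simp only at hij
    rw [hij] at a1 a2
    have h2 : |x i / ε - x j / ε| < 1 := by rw [abs_lt]; constructor <;> linarith
    rw [← sub_div, abs_div, abs_of_pos hε, div_lt_one hε] at h2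
    linarith
  calc ∑ i ∈ P, 1 / (x i) ^ 2
      ≤ ∑ i ∈ P, 1 / ε ^ 2 * (1 / ((⌊x i / ε⌋₊ : ℕ) : ℝ) ^ 2) := by
        refine Finset.sum_le_sum fun i hi => ?_
        have h1 : 1 ≤ x i / ε := (one_le_div hε).2 (hx i hi)
        have h2 : (1 : ℝ) ≤ (⌊x i / ε⌋₊ : ℕ) := by
          exact_mod_cast (Nat.one_le_floor_iff _).2 h1
        have h3 : ε * (⌊x i / ε⌋₊ : ℕ) ≤ x i := by
          have := Nat.floor_le (zero_le_one.trans h1)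
          rw [le_div_iff₀ hε] at this
          linarith
        rw [one_div_mul_one_div, ← mul_pow]
        gcongr
    _ = 1 / ε ^ 2 * ∑ n ∈ P.image (fun i => ⌊x i / ε⌋₊), 1 / (n : ℝ) ^ 2 := by
        rw [← Finset.mul_sum, Finset.sum_image hinj]
    _ ≤ 1 / ε ^ 2 * (Real.pi ^ 2 / 6) := by
        gcongr
        exact sum_le_hasSum _ (fun _ _ => by positivity) hasSum_zeta_two

/-- The positive and the negative points each contribute at most `ε⁻² ζ(2)`. -/
lemma sep_sum_bound {ι : Type*} (P : Finset ι) (x : ι → ℝ) (ε : ℝ) (hε : 0 < ε)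
    (hx : ∀ i ∈ P, ε ≤ |x i|) (hsep : ∀ i ∈ P, ∀ j ∈ P, i ≠ j → ε ≤ |x i - x j|) :
    ∑ i ∈ P, 1 / (x i) ^ 2 ≤ 1 / ε ^ 2 * (Real.pi ^ 2 / 3) := by
  rw [← Finset.sum_filter_add_sum_filter_not P (fun i => 0 < x i)]
  have h1 := pos_sum_bound (P.filter (fun i => 0 < x i)) x ε hε
    (fun i hi => by
      rw [Finset.mem_filter] at hi
      simpa [abs_of_pos hi.2] using hx i hi.1)
    (fun i hi j hj => hsep i (Finset.mem_filter.1 hi).1 j (Finset.mem_filter.1 hj).1)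
  have h2 := pos_sum_bound (P.filter (fun i => ¬ 0 < x i)) (fun i => - x i) ε hε
    (fun i hi => by
      rw [Finset.mem_filter] at hi
      simpa [abs_of_nonpos (not_lt.1 hi.2)] using hx i hi.1)
    (fun i hi j hj hij => by
      have := hsep i (Finset.mem_filter.1 hi).1 j (Finset.mem_filter.1 hj).1 hij
      rw [abs_sub_comm] at this
      convert this using 2
      ring)
  simp only [neg_sq] at h2
  linarith

/-- The signed distance of `ωn` to the nearest integer. -/
def sdist (ω : ℝ) (n : ℕ) : ℝ := ω * n - round (ω * n)

/-- The points `ωk mod 1`, `1 ≤ k ≤ n`, keep a distance at least `ν n^{-τ}` from `0` and from each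
other, since their differences are again of the form `ωj mod 1` with `|j| < n`. At `k` with
`sdist ω k = 0` the summand would be the junk value `0`; the Diophantine condition excludes this. -/
lemma russmann_sum {ν τ ω : ℝ} (hτ : 1 ≤ τ) (hν : 0 < ν) (hd : IsDiophantine ν τ ω) (n : ℕ) :
    ∑ k ∈ Finset.Icc 1 n, 1 / (sdist ω k) ^ 2 ≤
      Real.pi ^ 2 / 3 * (ν⁻¹) ^ 2 * (n : ℝ) ^ (2 * τ) := by
  rcases Nat.eq_zero_or_pos n with rfl | hn
  · simp; positivity
  have hn' : (0 : ℝ) < n := by exact_mod_cast hn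
  have key : ∀ q k : ℤ, k ≠ 0 → |k| ≤ n → ν * (n : ℝ) ^ (-τ) ≤ |ω * (k : ℝ) - (q : ℝ)| := by
    intro q k hk hkn
    refine le_trans ?_ (hd q k hk)
    have h1 : (0 : ℝ) < |(k : ℝ)| := by simpa using hk
    have h2 : |(k : ℝ)| ≤ n := by exact_mod_cast hkn
    gcongr ν * ?_
    exact Real.rpow_le_rpow_of_nonpos h1 h2 (by linarith)
  have h := sep_sum_bound (Finset.Icc 1 n) (sdist ω) (ν * (n : ℝ) ^ (-τ)) (by positivity)
    (fun i hi => by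
      rw [Finset.mem_Icc] at hi
      have := key (round (ω * i)) i (by omega) (by rw [abs_of_nonneg] <;> omega)
      simpa [sdist] using this)
    (fun i hi j hj hij => by
      rw [Finset.mem_Icc] at hi hj
      have := key (round (ω * i) - round (ω * j)) (i - j) (by omega) (by rw [abs_le]; omega)
      convert this using 2
      simp [sdist]
      ring)
  refine h.trans (le_of_eq ?_)
  rw [Real.rpow_neg hn'.le, show 2 * τ = τ * (2 : ℕ) by push_cast; ring, Real.rpow_mul_natCast hn'.le]
  have : (n : ℝ) ^ τ ≠ 0 := by positivity
  field_simp

/-- An Abelian estimate: polynomial growth `K n^p` of partial sums gives the Gamma-function bound for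
exponentially damped sums. It is summation by parts in integral form, through `e^{-sk} = ∫_k^∞ s e^{-st} dt`. -/
lemma laplace_sum (a : ℕ → ℝ) (K p s : ℝ) (hp : 0 < p) (hs : 0 < s)
    (hK : 0 ≤ K)
    (hS : ∀ n : ℕ, ∑ k ∈ Finset.Icc 1 n, a k ≤ K * (n : ℝ) ^ p) (ha : ∀ n, 0 ≤ a n) (N : ℕ) :
    ∑ k ∈ Finset.Icc 1 N, a k * Real.exp (-(s * k)) ≤ K * (s ^ (-p) * Real.Gamma (p + 1)) := by
  have hI : MeasureTheory.IntegrableOn (fun t : ℝ => s * Real.exp (-(s * t))) (Set.Ioi 0) := by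
    have := (exp_neg_integrableOn_Ioi 0 hs).const_mul s
    simp only [neg_mul] at this
    exact this
  have hval : ∀ k : ℕ, ∫ t in Set.Ioi (k : ℝ), s * Real.exp (-(s * t)) = Real.exp (-(s * k)) := by
    intro k
    have := integral_exp_mul_Ioi (a := -s) (by linarith) (k : ℝ)
    rw [MeasureTheory.integral_const_mul]
    simp only [neg_mul] at this
    rw [this]
    field_simp
  have hG : ∫ t in Set.Ioi (0 : ℝ), K * (t ^ p * (s * Real.exp (-(s * t)))) =
      K * (s ^ (-p) * Real.Gamma (p + 1)) := by
    have := Real.integral_rpow_mul_exp_neg_mul_Ioi (a := p + 1) (r := s) (by linarith) hs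
    simp only [add_sub_cancel_right] at this
    rw [MeasureTheory.integral_const_mul]
    simp_rw [show ∀ t : ℝ, t ^ p * (s * Real.exp (-(s * t))) =
      s * (t ^ p * Real.exp (-(s * t))) by intro t; ring]
    rw [MeasureTheory.integral_const_mul, this, one_div, Real.inv_rpow hs.le,
      Real.rpow_add_one hs.ne', Real.rpow_neg hs.le]
    field_simp
  have hGI : MeasureTheory.IntegrableOn
      (fun t : ℝ => K * (t ^ p * (s * Real.exp (-(s * t))))) (Set.Ioi 0) := by
    have := integrableOn_rpow_mul_exp_neg_mul_rpow (p := 1) (s := p) (b := s)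
      (by linarith) one_pos hs
    refine MeasureTheory.IntegrableOn.congr_fun (this.const_mul (K * s)) ?_ measurableSet_Ioi
    intro t _
    simp
    ring
  have hind : ∀ k : ℕ, Real.exp (-(s * k)) =
      ∫ t in Set.Ioi (0 : ℝ), (Set.Ioi (k : ℝ)).indicator (fun t => s * Real.exp (-(s * t))) t := by
    intro k
    rw [MeasureTheory.setIntegral_indicator measurableSet_Ioi, Set.Ioi_inter_Ioi,
      max_eq_right (by positivity), hval]
  have hII : ∀ k : ℕ, MeasureTheory.IntegrableOn
      (fun t => a k * (Set.Ioi (k : ℝ)).indicator (fun t => s * Real.exp (-(s * t))) t)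
      (Set.Ioi 0) :=
    fun k => (MeasureTheory.Integrable.indicator hI measurableSet_Ioi).const_mul _
  -- compare integrands: at `t` the left side has the partial sum over `k < t`
  rw [← hG]
  simp_rw [hind, ← MeasureTheory.integral_const_mul]
  rw [← MeasureTheory.integral_finsetSum _ (fun k _ => hII k)]
  refine MeasureTheory.setIntegral_mono_on (MeasureTheory.integrable_finsetSum _ fun k _ => hII k)
    hGI measurableSet_Ioi ?_
  intro t ht
  have ht0 : (0 : ℝ) < t := ht
  have hpos : 0 ≤ s * Real.exp (-(s * t)) := by positivity
  calc ∑ k ∈ Finset.Icc 1 N, a k * (Set.Ioi (k : ℝ)).indicator (fun t => s * Real.exp (-(s * t))) t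
      ≤ ∑ k ∈ Finset.Icc 1 N, (if k ≤ ⌊t⌋₊ then a k else 0) * (s * Real.exp (-(s * t))) := by
        refine Finset.sum_le_sum fun k _ => ?_
        by_cases hk : (k : ℝ) < t
        · rw [Set.indicator_of_mem (show t ∈ Set.Ioi (k : ℝ) from hk), if_pos (Nat.le_floor hk.le)]
        · rw [Set.indicator_of_notMem (show t ∉ Set.Ioi (k : ℝ) from hk), mul_zero]
          refine mul_nonneg ?_ hpos
          split_ifs <;> simp [ha]
    _ = (∑ k ∈ (Finset.Icc 1 N).filter (· ≤ ⌊t⌋₊), a k) * (s * Real.exp (-(s * t))) := by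
        rw [← Finset.sum_mul, Finset.sum_filter]
    _ ≤ (∑ k ∈ Finset.Icc 1 ⌊t⌋₊, a k) * (s * Real.exp (-(s * t))) := by
        gcongr
        · exact fun i _ _ => ha i
        · intro k hk
          simp only [Finset.mem_filter, Finset.mem_Icc] at hk ⊢
          exact ⟨hk.1.1, hk.2⟩
    _ ≤ (K * t ^ p) * (s * Real.exp (-(s * t))) := by
        gcongr
        refine (hS _).trans ?_
        gcongr
        exact Nat.floor_le ht0.le
    _ = _ := by ring

/-! ### Fourier coefficients on horizontal lines of the strip -/

/-- The character `z ↦ e^{2πikz}` of `ℂ/ℤ`. -/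
def ce (k : ℤ) (z : ℂ) : ℂ := exp (2 * Real.pi * I * k * z)

/-- The `k`-th Fourier coefficient `∫₀¹ e^{-2πikx} g(x) dx` of a `1`-periodic `g : ℝ → ℂ`. -/
def cf (g : ℝ → ℂ) (k : ℤ) : ℂ := ∫ x in (0:ℝ)..1, ce (-k) x * g x

lemma ce_add (k : ℤ) (z w : ℂ) : ce k (z + w) = ce k z * ce k w := by
  rw [ce, ce, ce, ← exp_add]; ring_nf

lemma ce_neg_mul (k : ℤ) (z : ℂ) : ce (-k) z * ce k z = 1 := by
  rw [ce, ce, ← exp_add, ← exp_zero]; push_cast; ring_nf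

lemma ce_one (k : ℤ) : ce k 1 = 1 := by
  rw [ce, exp_eq_one_iff]; exact ⟨k, by ring⟩

lemma norm_ce (k : ℤ) (z : ℂ) : ‖ce k z‖ = Real.exp (-(2 * Real.pi * k * z.im)) := by
  rw [ce, norm_exp]; congr 1; simp

lemma norm_ce_ofReal (k : ℤ) (x : ℝ) : ‖ce k x‖ = 1 := by simp [norm_ce]

lemma differentiable_ce (k : ℤ) : Differentiable ℂ (ce k) := by
  unfold ce; fun_prop

@[fun_prop]
lemma continuous_ce (k : ℤ) : Continuous (ce k) := (differentiable_ce k).continuous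

lemma fourier_eq_ce (k : ℤ) (x : ℝ) : fourier k (x : AddCircle (1 : ℝ)) = ce k x := by
  rw [fourier_coe_apply, ce]; simp

/-- A continuous periodic function, seen on the circle. -/
def circ (g : ℝ → ℂ) (hg : Continuous g) (hp : ∀ x, g (x + 1) = g x) : C(AddCircle (1 : ℝ), ℂ) where
  toFun := Function.Periodic.lift (f := g) (c := 1) hp
  continuous_toFun := continuous_quot_lift _ hg

lemma circ_coe (g : ℝ → ℂ) (hg : Continuous g) (hp : ∀ x, g (x + 1) = g x) (x : ℝ) :
    circ g hg hp (x : AddCircle (1 : ℝ)) = g x := Function.Periodic.lift_coe (f := g) (c := 1) hp x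

lemma fourierCoeff_circ (g : ℝ → ℂ) (hg : Continuous g) (hp : ∀ x, g (x + 1) = g x) (k : ℤ) :
    fourierCoeff (circ g hg hp) k = cf g k := by
  rw [fourierCoeff_eq_intervalIntegral _ _ 0, cf]
  simp only [circ_coe, fourier_eq_ce, smul_eq_mul]
  simp

/-- Fourier inversion. -/
lemma hasSum_cf (g : ℝ → ℂ) (hg : Continuous g) (hp : ∀ x, g (x + 1) = g x)
    (hs : Summable (cf g)) (x : ℝ) : HasSum (fun k => cf g k * ce k x) (g x) := by
  have h : Summable (fourierCoeff (circ g hg hp)) := by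
    simpa only [funext (fourierCoeff_circ g hg hp)] using hs
  have := has_pointwise_sum_fourier_series_of_summable h (x : AddCircle (1 : ℝ))
  simpa only [fourierCoeff_circ, fourier_eq_ce, circ_coe, smul_eq_mul] using this

/-- Bessel's inequality. -/
lemma bessel (g : ℝ → ℂ) (hg : Continuous g) (hp : ∀ x, g (x + 1) = g x) (M : ℝ)
    (hM : ∀ x, ‖g x‖ ≤ M) (S : Finset ℤ) : ∑ k ∈ S, ‖cf g k‖ ^ 2 ≤ M ^ 2 := by
  have h := hasSum_sq_fourierCoeff (ContinuousMap.toLp (E := ℂ) 2 AddCircle.haarAddCircle ℂ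
    (circ g hg hp))
  simp only [fourierCoeff_toLp, fourierCoeff_circ] at h
  refine (sum_le_hasSum S (fun _ _ => by positivity) h).trans ?_
  have hb : ∀ t, ‖circ g hg hp t‖ ≤ M := by
    intro t
    induction t using QuotientAddGroup.induction_on with
    | H x => rw [circ_coe]; exact hM x
  calc _ = ∫ t, ‖circ g hg hp t‖ ^ 2 ∂AddCircle.haarAddCircle := by
        refine MeasureTheory.integral_congr_ae ?_
        filter_upwards [ContinuousMap.coeFn_toLp (p := 2) (𝕜 := ℂ) AddCircle.haarAddCircle
          (circ g hg hp)] with t ht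
        rw [ht]
    _ ≤ ∫ t : AddCircle (1 : ℝ), M ^ 2 ∂AddCircle.haarAddCircle := by
        refine MeasureTheory.integral_mono_of_nonneg
          (Filter.Eventually.of_forall fun t => by positivity)
          (MeasureTheory.integrable_const _) (Filter.Eventually.of_forall fun t => ?_)
        exact pow_le_pow_left₀ (norm_nonneg _) (hb t) 2
    _ = M ^ 2 := by simp

lemma cf_shift (g : ℝ → ℂ) (hp : ∀ x, g (x + 1) = g x) (a : ℝ) (k : ℤ) :
    cf (fun x => g (x + a)) k = ce k a * cf g k := by
  have hper : Function.Periodic (fun x : ℝ => ce (-k) x * g x) 1 := by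
    intro x
    simp [ce_add, ce_one, hp]
  have h1 := hper.intervalIntegral_add_eq a 0
  rw [zero_add] at h1
  rw [cf, cf, ← h1, ← intervalIntegral.integral_const_mul]
  have h2 := intervalIntegral.integral_comp_add_right (a := 0) (b := 1)
    (fun x : ℝ => ce k a * (ce (-k) x * g x)) a
  rw [zero_add, add_comm 1 a] at h2
  rw [← h2]
  congr 1
  ext x
  push_cast
  rw [ce_add]
  linear_combination (-(ce (-k) x * g (x + a))) * ce_neg_mul k a

/-- Moving the line of integration by Cauchy's theorem: for `f ∈ A_r` the coefficients on the line
`Im z = y`, boundary lines included, are those on the real axis times `e^{-2πky}`. The vertical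
sides of the rectangle cancel by periodicity. -/
lemma cf_strip {r : ℝ} {f : ℂ → ℂ} (hf : MemA r f) {y : ℝ} (hy : |y| ≤ r) (k : ℤ) :
    cf (fun x => f (x + y * I)) k = Real.exp (-(2 * Real.pi * k * y)) * cf (fun x => f x) k := by
  obtain ⟨hper, hd, hc⟩ := hf
  have hint : ∀ z : ℂ, |z.im| < r → z ∈ interior (strip r) := by
    intro z hz
    refine mem_interior.2 ⟨{z : ℂ | |z.im| < r}, ?_, ?_, hz⟩
    · exact fun w hw => show |w.im| ≤ r from le_of_lt hw
    · exact isOpen_lt (by fun_prop) continuous_const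
  have h := integral_boundary_rect_eq_zero_of_continuousOn_of_differentiableOn
    (fun z => ce (-k) z * f z) 0 (1 + y * I) ?_ ?_
  · have hside : ∀ t : ℝ, ce (-k) (1 + t * I) * f (1 + t * I) = ce (-k) (t * I) * f (t * I) := by
      intro t
      rw [add_comm, hper, ce_add, ce_one, mul_one]
    simp [hside] at h
    rw [cf, cf, sub_eq_zero.1 h, ← intervalIntegral.integral_const_mul]
    congr 1
    ext x
    have : ce (-k) (y * I) * Real.exp (-(2 * Real.pi * k * y)) = 1 := by
      rw [ce, ofReal_exp, ← exp_add, ← exp_zero]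
      congr 1
      push_cast
      linear_combination (-(2 * Real.pi * k * y : ℂ)) * I_sq
    rw [ce_add]
    linear_combination (-(ce (-k) x * f (x + y * I))) * this
  · refine ((continuous_ce _).continuousOn).mul (hc.mono ?_)
    intro z hz
    have h2 := hz.2
    simp only [Set.mem_preimage, zero_im, add_im, one_im, mul_im, ofReal_re, I_im, mul_one,
      ofReal_im, I_re, mul_zero, add_zero, zero_add] at h2
    refine le_trans ?_ hy
    simpa using Set.abs_sub_left_of_mem_uIcc h2
  · refine ((differentiable_ce _).differentiableOn).mul (hd.mono ?_)
    intro z hz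
    have h2 := hz.2
    simp only [Set.mem_preimage, zero_im, add_im, one_im, mul_im, ofReal_re, I_im, mul_one,
      ofReal_im, I_re, mul_zero, add_zero, zero_add, Set.mem_Ioo] at h2
    refine hint z (lt_of_lt_of_le ?_ hy)
    rcases le_total 0 y with h0 | h0
    · rw [min_eq_left h0, max_eq_right h0] at h2
      rw [abs_of_pos h2.1, abs_of_nonneg h0]; exact h2.2
    · rw [min_eq_right h0, max_eq_left h0] at h2
      rw [abs_of_neg h2.2, abs_of_nonpos h0]; linarith

lemma line_mem {r y : ℝ} (hy : |y| ≤ r) (x : ℝ) : (x + y * I : ℂ) ∈ strip r := by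
  simpa [strip] using hy

lemma line_continuous {r : ℝ} {f : ℂ → ℂ} (hf : MemA r f) {y : ℝ} (hy : |y| ≤ r) :
    Continuous (fun x : ℝ => f (x + y * I)) :=
  hf.2.2.comp_continuous (by fun_prop) (line_mem hy)

lemma line_periodic {r : ℝ} {f : ℂ → ℂ} (hf : MemA r f) (y : ℝ) (x : ℝ) :
    f ((x + 1 : ℝ) + y * I) = f (x + y * I) := by
  rw [← hf.1 (x + y * I)]; congr 1; push_cast; ring

/-- By periodicity the supremum is over a compact rectangle, so `supNorm` is a genuine bound. -/
lemma le_supNorm {r : ℝ} {f : ℂ → ℂ} (hf : MemA r f) {z : ℂ} (hz : z ∈ strip r) :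
    ‖f z‖ ≤ supNorm r f := by
  have hK : IsCompact (Set.Icc (0 : ℝ) 1 ×ℂ Set.Icc (-r) r) :=
    isCompact_Icc.reProdIm isCompact_Icc
  obtain ⟨C, hC⟩ := hK.exists_bound_of_continuousOn (f := f) (hf.2.2.mono fun w hw => by
    exact abs_le.2 hw.2)
  refine le_csSup ⟨C, ?_⟩ ⟨z, hz, rfl⟩
  rintro _ ⟨w, hw, rfl⟩
  have hp : Function.Periodic f 1 := hf.1
  have h1 : f w = f (w - ⌊w.re⌋) := by
    have := hp.sub_int_mul_eq ⌊w.re⌋ (x := w)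
    rw [mul_one] at this
    exact this.symm
  simp only [h1]
  refine hC _ ⟨?_, ?_⟩
  · simp only [Set.mem_preimage, sub_re, intCast_re]
    exact ⟨Int.fract_nonneg w.re, (Int.fract_lt_one w.re).le⟩
  · simpa [abs_le] using (abs_le.1 hw)

/-! ### Small divisors -/

lemma two_mul_sdist_le_sin (ω : ℝ) (k : ℤ) :
    2 * |sdist ω k.natAbs| ≤ |Real.sin (Real.pi * k * ω)| := by
  have hpi := Real.pi_pos
  have h1 : |Real.sin (Real.pi * k * ω)| = |Real.sin (Real.pi * k.natAbs * ω)| := by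
    obtain ⟨n, rfl | rfl⟩ := Int.eq_nat_or_neg k
    · simp
    · rw [Int.natAbs_neg, Int.natAbs_natCast, ← abs_neg, ← Real.sin_neg]
      push_cast
      ring_nf
  have h2 : |Real.sin (Real.pi * k.natAbs * ω)| = |Real.sin (Real.pi * sdist ω k.natAbs)| := by
    rw [sdist, show Real.pi * (ω * k.natAbs - round (ω * k.natAbs)) =
      Real.pi * k.natAbs * ω - (round (ω * k.natAbs) : ℤ) * Real.pi by ring,
      Real.sin_sub_int_mul_pi, abs_mul, abs_zpow]
    simp
  rw [h1, h2]
  have h3 : |sdist ω k.natAbs| ≤ 1 / 2 := abs_sub_round _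
  have h4 := Real.mul_abs_le_abs_sin (x := Real.pi * sdist ω k.natAbs) (by
    rw [abs_mul, abs_of_pos hpi]; nlinarith)
  rw [abs_mul, abs_of_pos hpi] at h4
  refine le_trans (le_of_eq ?_) h4
  field_simp

/-- The divisor is bounded below by a multiple of the distance of `ω|k|` to `ℤ`. This rests on
`|e^{ia} - λ|² - (1+λ)² sin²(a/2) = (1-λ)² cos²(a/2)` with `a = 2πkω`,
which is where the factor `1 + λ` of the final constant comes from. -/
lemma divisor_lower (ω lam : ℝ) (hlam : 0 < lam) (k : ℤ) :
    2 * (1 + lam) * |sdist ω k.natAbs| ≤ ‖ce k ω - lam‖ := by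
  have h1 := two_mul_sdist_le_sin ω k
  set b := Real.pi * k * ω with hb
  have hce : ce k ω = Real.cos (2 * b) + Real.sin (2 * b) * I := by
    rw [ce, ofReal_cos, ofReal_sin, ← exp_mul_I]
    congr 1
    rw [hb]; push_cast; ring
  have h2 : ‖ce k ω - lam‖ ^ 2 = (Real.cos (2 * b) - lam) ^ 2 + Real.sin (2 * b) ^ 2 := by
    rw [hce, ← normSq_eq_norm_sq, normSq_apply]
    simp only [sub_re, add_re, mul_re, sub_im, add_im, mul_im, ofReal_re, ofReal_im, I_re, I_im]
    ring
  have h3 : ((1 + lam) * |Real.sin b|) ^ 2 ≤ ‖ce k ω - lam‖ ^ 2 := by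
    rw [h2, mul_pow, sq_abs, Real.cos_two_mul, Real.sin_two_mul]
    have hs : Real.sin b ^ 2 = 1 - Real.cos b ^ 2 := Real.sin_sq b
    rw [mul_pow, mul_pow, hs]
    nlinarith [mul_nonneg (sq_nonneg (1 - lam)) (sq_nonneg (Real.cos b))]
  have h4 := abs_le_of_sq_le_sq h3 (norm_nonneg _)
  have h5 := (le_abs_self _).trans h4
  nlinarith

lemma sdist_pos {ν τ ω : ℝ} (hν : 0 < ν) (hd : IsDiophantine ν τ ω) {n : ℕ} (hn : n ≠ 0) :
    0 < |sdist ω n| := by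
  have h := hd (round (ω * n)) n (by exact_mod_cast hn)
  have hn' : (0 : ℝ) < n := by positivity
  refine lt_of_lt_of_le ?_ (h.trans (le_of_eq ?_))
  · simp only [Int.cast_natCast, Nat.abs_cast]; positivity
  · simp [sdist]

lemma divisor_ne {ν τ ω lam : ℝ} (hν : 0 < ν) (hd : IsDiophantine ν τ ω) (hlam : 0 < lam)
    {k : ℤ} (hk : k ≠ 0) : 0 < ‖ce k ω - lam‖ := by
  have := sdist_pos hν hd (n := k.natAbs) (by simpa using hk)
  exact lt_of_lt_of_le (by positivity) (divisor_lower ω lam hlam k)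

/-- Folding a sum over `ℤ` onto the positive integers costs a factor `2`. -/
lemma sum_natAbs_le (h : ℕ → ℝ) (h0 : h 0 = 0) (hpos : ∀ n, 0 ≤ h n) (L : ℝ)
    (hL : ∀ N, ∑ n ∈ Finset.Icc 1 N, h n ≤ L) (S : Finset ℤ) :
    ∑ k ∈ S, h k.natAbs ≤ 2 * L := by
  have hT : ∀ T : Finset ℕ, ∑ n ∈ T, h n ≤ L := by
    intro T
    refine le_trans ?_ (hL (T.sup id))
    rw [← Finset.sum_filter_ne_zero]
    refine Finset.sum_le_sum_of_subset_of_nonneg (fun n hn => ?_) fun n _ _ => hpos n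
    obtain ⟨hn, hne⟩ := Finset.mem_filter.1 hn
    rw [Finset.mem_Icc]
    refine ⟨Nat.one_le_iff_ne_zero.2 fun hz => hne (hz ▸ h0), Finset.le_sup (f := id) hn⟩
  have hU : ∀ U : Finset ℤ, Set.InjOn Int.natAbs (U : Set ℤ) → ∑ k ∈ U, h k.natAbs ≤ L := by
    intro U hU
    rw [← Finset.sum_image (g := Int.natAbs) (f := h) hU]
    exact hT _
  rw [← Finset.sum_filter_add_sum_filter_not S (fun k => 0 ≤ k), two_mul]
  refine add_le_add (hU _ ?_) (hU _ ?_)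
  · intro i hi j hj hij
    simp only [Finset.coe_filter, Set.mem_ofPred_eq] at hi hj
    omega
  · intro i hi j hj hij
    simp only [Finset.coe_filter, Set.mem_ofPred_eq] at hi hj
    omega

/-- Fourier coefficients of the zero-average solution with right-hand side `g`. The mode `k = 0`
is set apart because its divisor `1 - λ` may vanish. -/
def solCoeff (ω lam : ℝ) (g : ℝ → ℂ) (k : ℤ) : ℂ :=
  if k = 0 then 0 else cf g k / (ce k ω - lam)

/-- The square sum of the weighted inverse divisors, by Rüssmann's estimate. -/
lemma sum_divisor_le {ν τ ω lam δ : ℝ} (hτ : 1 ≤ τ) (hν : 0 < ν) (hd : IsDiophantine ν τ ω)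
    (hlam : 0 < lam) (hδ : 0 < δ) (S : Finset ℤ) :
    ∑ k ∈ S, (if k = 0 then 0 else
        Real.exp (-(2 * Real.pi * |(k : ℝ)| * δ)) / ‖ce k ω - lam‖) ^ 2 ≤
      2 * (Real.pi ^ 2 / 3 * (ν⁻¹) ^ 2 * ((4 * Real.pi * δ) ^ (-(2 * τ)) *
        Real.Gamma (2 * τ + 1)) / (4 * (1 + lam) ^ 2)) := by
  have hpi := Real.pi_pos
  have hlap := laplace_sum (fun n => 1 / sdist ω n ^ 2) (Real.pi ^ 2 / 3 * (ν⁻¹) ^ 2) (2 * τ)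
    (4 * Real.pi * δ) (by linarith) (by positivity) (by positivity) (russmann_sum hτ hν hd)
    (fun n => by positivity)
  refine le_trans ?_ (sum_natAbs_le (fun n => 1 / sdist ω n ^ 2 *
    Real.exp (-(4 * Real.pi * δ * n)) / (4 * (1 + lam) ^ 2)) (by simp [sdist])
    (fun n => by positivity) _ (fun N => ?_) S)
  · refine Finset.sum_le_sum fun k _ => ?_
    split_ifs with hk
    · simp only [hk]; norm_num; positivity
    · have h1 := divisor_lower ω lam hlam k
      have h2 := sdist_pos hν hd (n := k.natAbs) (by simpa using hk)
      have h3 : Real.exp (-(2 * Real.pi * |(k : ℝ)| * δ)) ^ 2 =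
          Real.exp (-(4 * Real.pi * δ * k.natAbs)) := by
        rw [← Real.exp_nat_mul, Nat.cast_natAbs, Int.cast_abs]
        congr 1; push_cast; ring
      rw [div_pow, h3]
      calc _ ≤ Real.exp (-(4 * Real.pi * δ * k.natAbs)) /
            (2 * (1 + lam) * |sdist ω k.natAbs|) ^ 2 := by gcongr
        _ = _ := by
          rw [mul_pow, sq_abs]
          have : sdist ω k.natAbs ≠ 0 := abs_pos.1 h2
          field_simp
          ring
  · rw [← Finset.sum_div]
    gcongr
    exact hlap N

/-- `|c_k|² e^{4π|k|ρ}` is bounded by the sum of the squared coefficients on the two boundary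
lines. -/
lemma sum_weighted_coeff_le {ρ : ℝ} (hρ : 0 < ρ) {f : ℂ → ℂ} (hf : MemA ρ f) (S : Finset ℤ) :
    ∑ k ∈ S, (‖cf (fun x => f x) k‖ * Real.exp (2 * Real.pi * |(k : ℝ)| * ρ)) ^ 2 ≤
      2 * supNorm ρ f ^ 2 := by
  have hy1 : |ρ| ≤ ρ := (abs_of_pos hρ).le
  have hy2 : |-ρ| ≤ ρ := by rw [abs_neg]; exact hy1
  have b1 := bessel _ (line_continuous hf hy1) (line_periodic hf _) (supNorm ρ f)
    (fun x => le_supNorm hf (line_mem hy1 x)) S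
  have b2 := bessel _ (line_continuous hf hy2) (line_periodic hf _) (supNorm ρ f)
    (fun x => le_supNorm hf (line_mem hy2 x)) S
  rw [two_mul (supNorm ρ f ^ 2)]
  refine le_trans ?_ (add_le_add b1 b2)
  rw [← Finset.sum_add_distrib]
  refine Finset.sum_le_sum fun k _ => ?_
  rw [cf_strip hf hy1, cf_strip hf hy2, norm_mul, norm_mul, norm_real, norm_real,
    Real.norm_of_nonneg (Real.exp_nonneg _), Real.norm_of_nonneg (Real.exp_nonneg _)]
  rcases le_total 0 (k : ℝ) with h | h
  · rw [abs_of_nonneg h]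
    refine le_trans (le_of_eq ?_) (le_add_of_nonneg_left (by positivity))
    ring_nf
  · rw [abs_of_nonpos h]
    refine le_trans (le_of_eq ?_) (le_add_of_nonneg_right (by positivity))
    ring_nf

/-! ### The norm estimate -/

/-- The bound, with the final constant, for the absolutely summed Fourier series of the
solution on the line `Im z = y`: Cauchy–Schwarz applied to
`|c_k| e^{2π|k|ρ}` and `e^{-2π|k|δ} / |e^{2πikω} - λ|`. -/
lemma sum_solCoeff_le {ν τ ω lam ρ δ : ℝ} (hτ : 1 ≤ τ) (hν : 0 < ν) (hd : IsDiophantine ν τ ω)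
    (hlam : 0 < lam) (hρ : 0 < ρ) (hδ : 0 < δ)
    {f : ℂ → ℂ} (hf : MemA ρ f) {y : ℝ} (hy : |y| ≤ ρ - δ) (S : Finset ℤ) :
    ∑ k ∈ S, ‖solCoeff ω lam (fun x => f (x + y * I)) k‖ ≤
        ((2 * Real.pi) ^ (-τ) * (Real.pi / ((2 : ℝ) ^ τ * (1 + lam))) *
            Real.sqrt (Real.Gamma (2 * τ + 1) / 3)) * ν⁻¹ * δ ^ (-τ) *
          supNorm ρ f := by
  have hpi := Real.pi_pos
  have hG : 0 < Real.Gamma (2 * τ + 1) := Real.Gamma_pos_of_pos (by linarith)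
  have hM : 0 ≤ supNorm ρ f := (norm_nonneg _).trans
    (le_supNorm hf (z := 0) (by simpa [strip] using hρ.le))
  have h1 := sum_weighted_coeff_le hρ hf S
  have h2 := sum_divisor_le hτ hν hd hlam hδ S
  have hcs := Finset.sum_mul_sq_le_sq_mul_sq S
    (fun k : ℤ => ‖cf (fun x => f x) k‖ * Real.exp (2 * Real.pi * |(k : ℝ)| * ρ))
    (fun k : ℤ => if k = 0 then 0 else
        Real.exp (-(2 * Real.pi * |(k : ℝ)| * δ)) / ‖ce k ω - lam‖)
  have hle : ∑ k ∈ S, ‖solCoeff ω lam (fun x => f (x + y * I)) k‖ ≤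
      ∑ k ∈ S, (‖cf (fun x => f x) k‖ * Real.exp (2 * Real.pi * |(k : ℝ)| * ρ)) *
        (if k = 0 then 0 else
          Real.exp (-(2 * Real.pi * |(k : ℝ)| * δ)) / ‖ce k ω - lam‖) := by
    refine Finset.sum_le_sum fun k _ => ?_
    rw [solCoeff]
    split_ifs with hk
    · simp
    · rw [norm_div, cf_strip hf (hy.trans (by linarith)), norm_mul, norm_real,
        Real.norm_of_nonneg (Real.exp_nonneg _), ← mul_div_assoc]
      refine div_le_div_of_nonneg_right ?_ (norm_nonneg _)
      rw [mul_comm (Real.exp _), mul_assoc ‖cf (fun x : ℝ => f x) k‖ (Real.exp _) (Real.exp _),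
        ← Real.exp_add]
      gcongr
      have h3 : -((k : ℝ) * y) ≤ |(k : ℝ)| * (ρ - δ) := by
        refine (neg_le_abs _).trans ?_
        rw [abs_mul]
        gcongr
      nlinarith
  refine hle.trans (abs_le_of_sq_le_sq' ?_ (by positivity)).2
  refine hcs.trans ((mul_le_mul h1 h2 (Finset.sum_nonneg fun _ _ => by positivity)
    (by positivity)).trans (le_of_eq ?_))
  -- `4πδ = 2π · 2 · δ`
  have e1 : (4 * Real.pi * δ) ^ (-(2 * τ)) =
      ((2 * Real.pi) ^ (-τ)) ^ 2 * (((2 : ℝ) ^ τ)⁻¹) ^ 2 * (δ ^ (-τ)) ^ 2 := by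
    rw [← Real.rpow_neg (by norm_num), ← mul_pow, ← mul_pow,
      ← Real.mul_rpow (by positivity) (by positivity),
      ← Real.mul_rpow (by positivity) (by positivity), ← Real.rpow_mul_natCast (by positivity)]
    congr 1
    · ring
    · push_cast; ring
  rw [e1]
  simp only [mul_pow, div_pow]
  rw [Real.sq_sqrt (by positivity)]
  field_simp
  ring

/-! ### Solving the equation -/

/-- A solution on a line has the Fourier coefficients dictated by the equation. -/
lemma cf_solution {ω lam : ℝ} (hD : ∀ k : ℤ, k ≠ 0 → 0 < ‖ce k ω - lam‖) {p g : ℝ → ℂ}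
    (hp : Continuous p) (hper : ∀ x, p (x + 1) = p x) (h0 : cf p 0 = 0)
    (heq : ∀ x, p (x + ω) - lam * p x = g x) : cf p = solCoeff ω lam g := by
  ext k
  rw [solCoeff]
  split_ifs with hk
  · rw [hk, h0]
  · have hDk : ce k ω - lam ≠ 0 := norm_pos_iff.1 (hD k hk)
    rw [eq_div_iff hDk]
    have h1 : cf g k = cf (fun x => p (x + ω)) k - lam * cf p k := by
      rw [cf, cf, cf, ← intervalIntegral.integral_const_mul, ← intervalIntegral.integral_sub]
      · congr 1; ext x; rw [← heq]; ring
      · exact Continuous.intervalIntegrable (by fun_prop) _ _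
      · exact Continuous.intervalIntegrable (by fun_prop) _ _
    rw [h1, cf_shift p hper]
    ring

lemma cf_zero (g : ℝ → ℂ) : cf g 0 = ∫ x in (0:ℝ)..1, g x := by simp [cf, ce]

lemma integral_ce {k : ℤ} (hk : k ≠ 0) : ∫ x in (0:ℝ)..1, ce k x = 0 := by
  have hk' : (2 * Real.pi * I * k : ℂ) ≠ 0 := by
    simp [Real.pi_ne_zero, hk]
  simp only [ce]
  rw [integral_exp_mul_complex hk']
  have := ce_one k
  rw [ce] at this
  simp only [ofReal_one, ofReal_zero, mul_zero, exp_zero]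
  rw [this]; simp

/-- Existence and uniqueness, given absolute summability of the formal solution. Any solution has
summable coefficients `solCoeff`, hence equals its Fourier series. -/
lemma exists_solution {ω lam : ℝ} (hlam : 0 < lam) (hD : ∀ k : ℤ, k ≠ 0 → 0 < ‖ce k ω - lam‖)
    {g : ℝ → ℂ} (hg : Continuous g) (hper : ∀ x, g (x + 1) = g x) (h0 : cf g 0 = 0)
    (hs : Summable fun k => ‖solCoeff ω lam g k‖) :
    ∃! φ : ℝ → ℂ, Continuous φ ∧ (∀ x : ℝ, φ (x + 1) = φ x) ∧
      (∫ x in (0:ℝ)..1, φ x) = 0 ∧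
      ∀ θ : ℝ, φ (θ + ω) - (lam : ℂ) * φ θ = g θ := by
  have hn : ∀ k (x : ℝ), ‖solCoeff ω lam g k * ce k x‖ = ‖solCoeff ω lam g k‖ := fun k x => by
    rw [norm_mul, norm_ce_ofReal, mul_one]
  have hsx : ∀ x : ℝ, HasSum (fun k => solCoeff ω lam g k * ce k x)
      (∑' k, solCoeff ω lam g k * ce k x) := fun x =>
    (Summable.of_norm (by simpa only [hn] using hs)).hasSum
  have hcoef : ∀ k, cf g k = solCoeff ω lam g k * (ce k ω - lam) := by
    intro k
    rw [solCoeff]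
    split_ifs with hk
    · rw [hk, h0, zero_mul]
    · rw [div_mul_cancel₀ _ (norm_pos_iff.1 (hD k hk))]
  refine ⟨fun x => ∑' k, solCoeff ω lam g k * ce k x, ⟨?_, ?_, ?_, ?_⟩, ?_⟩
  · exact continuous_tsum (fun k => by fun_prop) hs fun k x => (hn k x).le
  · intro x
    simp [ce_add, ce_one]
  · have h := intervalIntegral.hasSum_integral_of_dominated_convergence (a := 0) (b := 1)
      (μ := MeasureTheory.volume)
      (F := fun k (x : ℝ) => solCoeff ω lam g k * ce k x)
      (f := fun x : ℝ => ∑' k, solCoeff ω lam g k * ce k x)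
      (fun k _ => ‖solCoeff ω lam g k‖)
      (fun k => Continuous.aestronglyMeasurable (by fun_prop))
      (fun k => Filter.Eventually.of_forall fun x _ => (hn k x).le)
      (Filter.Eventually.of_forall fun x _ => hs)
      (by simp)
      (Filter.Eventually.of_forall fun x _ => hsx x)
    refine h.unique ?_
    -- the zero mode has coefficient `0`, the other characters have zero mean
    have hz : ∀ k, ∫ x in (0:ℝ)..1, solCoeff ω lam g k * ce k x = 0 := by
      intro k
      rw [intervalIntegral.integral_const_mul]
      by_cases hk : k = 0
      · simp [solCoeff, hk]
      · rw [integral_ce hk, mul_zero]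
    simp only [hz]
    exact hasSum_zero
  · intro x
    have hcs : Summable (cf g) := by
      refine Summable.of_norm_bounded (hs.mul_right (1 + lam)) fun k => ?_
      rw [hcoef, norm_mul]
      gcongr
      refine (norm_sub_le _ _).trans ?_
      rw [norm_ce_ofReal, norm_real, Real.norm_of_nonneg hlam.le]
    refine HasSum.unique ?_ (hasSum_cf g hg hper hcs x)
    refine ((hsx (x + ω)).sub ((hsx x).mul_left (lam : ℂ))).congr_fun ?_
    intro k
    rw [hcoef, ofReal_add, ce_add]
    ring
  · rintro ψ ⟨hc, hp, ha, he⟩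
    have h := cf_solution hD hc hp (by rw [cf_zero, ha]) he
    ext x
    have := hasSum_cf ψ hc hp (by rw [h]; exact Summable.of_norm hs) x
    rw [h] at this
    exact this.unique (hsx x)

/-- Solution of the cohomology equation `φ(θ+ω) - λφ(θ) = ϑ(θ)` in the
"neutral" case `λ ∈ [A₀, A₀⁻¹]`, with `ω` Diophantine and `ϑ ∈ A_ρ` of zero
average: there is one and only one zero-average solution, and any solution in
`A_{ρ-δ}` satisfies `‖φ‖_{ρ-δ} ≤ C₀ ν⁻¹ δ^{-τ} ‖ϑ‖_ρ`, where
`C₀ = (2π)^{-τ} · π/(2^τ(1+λ)) · √(Γ(2τ+1)/3)`. -/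
theorem cohomology_neutral (A₀ lam ν τ ω ρ δ : ℝ)
    (hA₀ : 0 < A₀) (hA₀1 : A₀ < 1) (hlam : lam ∈ Set.Icc A₀ A₀⁻¹)
    (hτ : 1 ≤ τ) (hν : 0 < ν) (hdioph : IsDiophantine ν τ ω)
    (hρ : 0 < ρ) (hδ : 0 < δ) (hδρ : δ < ρ)
    (ϑ : ℂ → ℂ) (hϑ : MemA ρ ϑ) (hϑavg : (∫ x in (0:ℝ)..1, ϑ (x : ℂ)) = 0) :
    (∃! φ : ℝ → ℂ, Continuous φ ∧ (∀ x : ℝ, φ (x + 1) = φ x) ∧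
      (∫ x in (0:ℝ)..1, φ x) = 0 ∧
      ∀ θ : ℝ, φ (θ + ω) - (lam : ℂ) * φ θ = ϑ (θ : ℂ)) ∧
    (∀ φ : ℂ → ℂ, MemA (ρ - δ) φ → (∫ x in (0:ℝ)..1, φ (x : ℂ)) = 0 →
      (∀ θ ∈ strip (ρ - δ), φ (θ + (ω : ℂ)) - (lam : ℂ) * φ θ = ϑ θ) →
      supNorm (ρ - δ) φ ≤
        ((2 * Real.pi) ^ (-τ) * (Real.pi / ((2 : ℝ) ^ τ * (1 + lam))) *
            Real.sqrt (Real.Gamma (2 * τ + 1) / 3)) * ν⁻¹ * δ ^ (-τ) *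
          supNorm ρ ϑ) := by
  have hlam0 : 0 < lam := hA₀.trans_le hlam.1
  have hD : ∀ k : ℤ, k ≠ 0 → 0 < ‖ce k ω - lam‖ := fun k hk => divisor_ne hν hdioph hlam0 hk
  have hB := fun (y : ℝ) (hy : |y| ≤ ρ - δ) =>
    sum_solCoeff_le hτ hν hdioph hlam0 hρ hδ hϑ hy
  have hS : ∀ y : ℝ, |y| ≤ ρ - δ →
      Summable fun k => ‖solCoeff ω lam (fun x => ϑ (x + y * I)) k‖ := fun y hy =>
    summable_of_sum_le (fun _ => norm_nonneg _) (hB y hy)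
  refine ⟨?_, ?_⟩
  · have h0 : |(0 : ℝ)| ≤ ρ := by simpa using hρ.le
    have hS0 := hS 0 (by simpa using hδρ.le)
    have hc := line_continuous hϑ h0
    have hp := line_periodic hϑ 0
    simp only [ofReal_zero, zero_mul, add_zero] at hS0 hc hp
    exact exists_solution hlam0 hD hc hp (by rw [cf_zero]; exact hϑavg) hS0
  · intro φ hφ hφavg hφeq
    refine csSup_le (Set.Nonempty.image _ ⟨0, by simpa [strip] using hδρ.le⟩) ?_
    rintro _ ⟨z, hz, rfl⟩
    have hy : |z.im| ≤ ρ - δ := hz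
    have h := cf_solution (p := fun x => φ (x + z.im * I)) (g := fun x => ϑ (x + z.im * I))
      hD (line_continuous hφ hy) (line_periodic hφ _)
      (by rw [cf_strip hφ hy, cf_zero, hφavg, mul_zero])
      (fun x => by
        rw [← hφeq _ (line_mem hy x)]
        congr 2
        push_cast
        ring)
    have hsum := hasSum_cf _ (line_continuous hφ hy) (line_periodic hφ _)
      (by rw [h]; exact Summable.of_norm (hS z.im hy)) z.re
    rw [h] at hsum
    simp only [re_add_im] at hsum
    change ‖φ z‖ ≤ _
    rw [← hsum.tsum_eq]
    refine (norm_tsum_le_tsum_norm ?_).trans ?_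
    · simpa only [norm_mul, norm_ce_ofReal, mul_one] using hS z.im hy
    · simp only [norm_mul, norm_ce_ofReal, mul_one]
      exact (hS z.im hy).tsum_le_of_sum_le (hB z.im hy)
end
end

section
/- Conformal factor of the spin-orbit Poincaré map: fix a>0, ε ∈ ℝ, η ∈ ℝ and 0 ≤ e < 1. Let u: ℝ → ℝ be the (unique, strictly increasing) solution of Kepler's equation u(t) − e sin u(t) = t, and set r(t) = a(1 − e cos u(t)). Let f: [0,2π] → ℝ be differentiable, let (x(t), y(t)) be a solution on [0,2π] of the spin-orbit system x' = y, y' = −ε (a/r(t))³ sin(2x − 2f(t)) − η (a/r(t))⁶ (y − f'(t)), and let M: [0,2π] → M₂(ℝ) solve the variational equation M'(t) = A(t) M(t), M(0) = I, where A(t) = [[0, 1],[−2ε (a/r(t))³ cos(2x(t) − 2f(t)), −η (a/r(t))⁶]] is the Jacobian of the right-hand side along the solution. Then det M(2π) = exp( −η π (3e⁴ + 24e² + 8) / (4 (1−e²)^{9/2}) ). In particular the conformal factor of the spin-orbit Poincaré map is λ = exp( −η π (3e⁴ + 24e² + 8)/(4(1−e²)^{9/2}) ). -/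
open Real Matrix

noncomputable section

/-!
By Liouville's formula `D = det M` satisfies `D' = -η (a/r)⁶ D`, so the whole matter is the value of
`∫₀^{2π} (1 - e cos u(t))⁻⁶ dt`. Rather than integrating, an explicit antiderivative is exhibited.

Put `s = √(1 - e²)`. The true anomaly `v`, as a function of the eccentric anomaly `u`, satisfies
`dv/du = s / (1 - e cos u)` and `1 + e cos v = (1 - e²) / (1 - e cos u)`, and Kepler's equation gives
`du/dt = 1 / (1 - e cos u)`. Hence `s⁹ (1 - e cos u)⁻⁶ dt = (1 + e cos v)⁴ dv`, a trigonometric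
polynomial whose primitive is `(1 + 3e² + 3e⁴/8) v` plus a polynomial in `cos v`, `sin v` that is odd
in `sin v`. Over one revolution only the secular term survives and contributes
`2π (1 + 3e² + 3e⁴/8) = π (3e⁴ + 24e² + 8) / 4`.

The lift of the true anomaly that is smooth on all of `ℝ` is
`v = u + 2 arctan (β sin u / (1 - β cos u))` with `β = e / (1 + s)` (`trueAnomaly`);
its cosine and sine enter only through their rational expressions in `cos u`, `sin u`.
-/

/-- The true anomaly as a function of the eccentric anomaly `u`, in the form that is globally smooth
in `u`. The parameter is `b = e / (1 + √(1 - e²))`, for which `e = 2b / (1 + b²)`. -/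
def trueAnomaly (b u : ℝ) : ℝ :=
  u + 2 * Real.arctan (b * Real.sin u / (1 - b * Real.cos u))

lemma one_sub_mul_cos_pos {e : ℝ} (h0 : 0 ≤ e) (h1 : e < 1) (u : ℝ) :
    0 < 1 - e * Real.cos u := by
  nlinarith [Real.cos_le_one u]

lemma hasDerivAt_trueAnomaly {b : ℝ} (h0 : 0 ≤ b) (h1 : b < 1) (u : ℝ) :
    HasDerivAt (trueAnomaly b) ((1 - b ^ 2) / (1 + b ^ 2 - 2 * b * Real.cos u)) u := by
  have hp := one_sub_mul_cos_pos h0 h1 u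
  have hq : 0 < 1 + b ^ 2 - 2 * b * Real.cos u := by
    nlinarith [Real.cos_le_one u, sq_nonneg (1 - b), mul_pos (sub_pos.2 h1) (sub_pos.2 h1)]
  have hs := Real.sin_sq_add_cos_sq u
  have hw : HasDerivAt (fun u => b * Real.sin u / (1 - b * Real.cos u))
      ((b * Real.cos u - b ^ 2) / (1 - b * Real.cos u) ^ 2) u := by
    have := ((Real.hasDerivAt_sin u).const_mul b).div
      (((Real.hasDerivAt_cos u).const_mul b).const_sub 1) hp.ne'
    refine this.congr_deriv ?_
    congr 1
    linear_combination (-b ^ 2) * hs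
  have h1w : 1 + (b * Real.sin u / (1 - b * Real.cos u)) ^ 2
      = (1 + b ^ 2 - 2 * b * Real.cos u) / (1 - b * Real.cos u) ^ 2 := by
    field_simp
    linear_combination b ^ 2 * hs
  refine ((hasDerivAt_id u).add (hw.arctan.const_mul 2)).congr_deriv ?_
  rw [h1w]
  field_simp
  ring

/-- The primitive of `(1 + e cos v)⁴` in the variable `v`, with `C`, `S` standing for `cos v`,
`sin v`. -/
def anomalyPrimitive (e v C S : ℝ) : ℝ :=
  (1 + 3 * e ^ 2 + 3 * e ^ 4 / 8) * v + 4 * e * S + 3 * e ^ 2 * (S * C)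
    + 4 * e ^ 3 * (S - S ^ 3 / 3) + e ^ 4 * (C ^ 3 * S / 4 + 3 / 8 * (C * S))

lemma hasDerivAt_anomalyPrimitive {e k u : ℝ} {V C S : ℝ → ℝ}
    (hV : HasDerivAt V k u) (hC : HasDerivAt C (-S u * k) u) (hS : HasDerivAt S (C u * k) u)
    (h1 : C u ^ 2 + S u ^ 2 = 1) :
    HasDerivAt (fun u => anomalyPrimitive e (V u) (C u) (S u)) ((1 + e * C u) ^ 4 * k) u := by
  unfold anomalyPrimitive
  refine (((((hV.const_mul (1 + 3 * e ^ 2 + 3 * e ^ 4 / 8)).add (hS.const_mul (4 * e))).add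
    ((hS.mul hC).const_mul (3 * e ^ 2))).add
    ((hS.sub ((hS.pow 3).div_const 3)).const_mul (4 * e ^ 3))).add
    (((((hC.pow 3).mul hS).div_const 4).add
      ((hC.mul hS).const_mul (3 / 8))).const_mul (e ^ 4))).congr_deriv ?_
  have h2 : S u ^ 2 = 1 - C u ^ 2 := by linarith
  simp only [Pi.pow_apply]
  push_cast
  ring_nf
  simp only [h2]
  ring

/-- There is a primitive, in the eccentric anomaly, of `s⁹ (1 - e cos u)⁻⁵`, whose increment over
one revolution is `π (3e⁴ + 24e² + 8) / 4`. -/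
lemma exists_primitive {e : ℝ} (he0 : 0 ≤ e) (he1 : e < 1) :
    ∃ F : ℝ → ℝ, (∀ u, HasDerivAt F (√(1 - e ^ 2) ^ 9 / (1 - e * Real.cos u) ^ 5) u) ∧
      F 0 = 0 ∧ F (2 * π) = π * (3 * e ^ 4 + 24 * e ^ 2 + 8) / 4 := by
  have hpos : 0 < 1 - e ^ 2 := by nlinarith
  set s := √(1 - e ^ 2) with hs
  have hs0 : 0 < s := Real.sqrt_pos.2 hpos
  have hs2 : s ^ 2 = 1 - e ^ 2 := Real.sq_sqrt hpos.le
  have hb0 : 0 ≤ e / (1 + s) := by positivity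
  have hb1 : e / (1 + s) < 1 := by
    rw [div_lt_one (by positivity)]; linarith
  refine ⟨fun u => anomalyPrimitive e (trueAnomaly (e / (1 + s)) u)
    ((Real.cos u - e) / (1 - e * Real.cos u)) (s * Real.sin u / (1 - e * Real.cos u)), ?_, ?_, ?_⟩
  · intro u
    have hp := one_sub_mul_cos_pos he0 he1 u
    have hsc := Real.sin_sq_add_cos_sq u
    have hden : HasDerivAt (fun u => 1 - e * Real.cos u) (e * Real.sin u) u :=
      (((Real.hasDerivAt_cos u).const_mul e).const_sub 1).congr_deriv (by ring)
    have hV : HasDerivAt (trueAnomaly (e / (1 + s))) (s / (1 - e * Real.cos u)) u := by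
      refine (hasDerivAt_trueAnomaly hb0 hb1 u).congr_deriv ?_
      have hn : 1 - (e / (1 + s)) ^ 2 = 2 / (1 + s) * s := by
        field_simp
        linear_combination -hs2
      have hd : 1 + (e / (1 + s)) ^ 2 - 2 * (e / (1 + s)) * Real.cos u
          = 2 / (1 + s) * (1 - e * Real.cos u) := by
        field_simp
        linear_combination hs2
      rw [hn, hd, mul_div_mul_left _ _ (by positivity)]
    have hC : HasDerivAt (fun u => (Real.cos u - e) / (1 - e * Real.cos u))
        (-(s * Real.sin u / (1 - e * Real.cos u)) * (s / (1 - e * Real.cos u))) u := by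
      refine (((Real.hasDerivAt_cos u).sub_const e).div hden hp.ne').congr_deriv ?_
      field_simp
      linear_combination Real.sin u * hs2
    have hS : HasDerivAt (fun u => s * Real.sin u / (1 - e * Real.cos u))
        ((Real.cos u - e) / (1 - e * Real.cos u) * (s / (1 - e * Real.cos u))) u := by
      refine (((Real.hasDerivAt_sin u).const_mul s).div hden hp.ne').congr_deriv ?_
      rw [div_mul_div_comm, ← pow_two]
      congr 1
      linear_combination (-(s * e)) * hsc
    refine (hasDerivAt_anomalyPrimitive (e := e) hV hC hS ?_).congr_deriv ?_
    · rw [div_pow, div_pow, ← add_div, div_eq_one_iff_eq (by positivity)]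
      linear_combination (Real.sin u ^ 2) * hs2 + (1 - e ^ 2) * hsc
    · have : 1 + e * ((Real.cos u - e) / (1 - e * Real.cos u)) = s ^ 2 / (1 - e * Real.cos u) := by
        rw [hs2]; field_simp; ring
      rw [this]
      field_simp
  · simp [anomalyPrimitive, trueAnomaly]
  · simp [anomalyPrimitive, trueAnomaly]
    ring

/-- For `e < 1` this makes the solution of Kepler's equation unique and Lipschitz in `t`, which supplies
the continuity needed to differentiate the inverse function. -/
lemma kepler_antilipschitz {e : ℝ} (he0 : 0 ≤ e) (p q : ℝ) :
    (1 - e) * |p - q| ≤ |(p - e * Real.sin p) - (q - e * Real.sin q)| := by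
  have h1 : |Real.sin p - Real.sin q| ≤ |p - q| := Real.abs_sin_sub_sin_le p q
  have h2 : |p - q| - |e * (Real.sin p - Real.sin q)| ≤
      |(p - q) - e * (Real.sin p - Real.sin q)| := abs_sub_abs_le_abs_sub _ _
  rw [abs_mul, abs_of_nonneg he0] at h2
  have h3 : (p - q) - e * (Real.sin p - Real.sin q)
      = (p - e * Real.sin p) - (q - e * Real.sin q) := by ring
  rw [h3] at h2
  nlinarith [mul_le_mul_of_nonneg_left h1 he0]

lemma kepler_eq_of_eq {e : ℝ} (he0 : 0 ≤ e) (he1 : e < 1) {p q : ℝ}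
    (h : p - e * Real.sin p = q - e * Real.sin q) : p = q := by
  have := kepler_antilipschitz he0 p q
  rw [h, sub_self, abs_zero] at this
  have h2 : |p - q| ≤ 0 := by
    by_contra! hc
    nlinarith [mul_pos (sub_pos.2 he1) hc]
  exact sub_eq_zero.1 (abs_nonpos_iff.1 h2)

lemma kepler_hasDerivAt {e : ℝ} (he0 : 0 ≤ e) (he1 : e < 1) {u : ℝ → ℝ}
    (hu : ∀ t, u t - e * Real.sin (u t) = t) (t : ℝ) :
    HasDerivAt u (1 - e * Real.cos (u t))⁻¹ t := by
  have hlip : LipschitzWith (Real.toNNReal (1 - e)⁻¹) u := by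
    refine LipschitzWith.of_dist_le_mul fun p q => ?_
    have h := kepler_antilipschitz he0 (u p) (u q)
    rw [hu, hu] at h
    have h1 : 0 < 1 - e := sub_pos.2 he1
    rw [Real.coe_toNNReal _ (by positivity), Real.dist_eq, Real.dist_eq, inv_mul_eq_div,
      le_div_iff₀ h1]
    linarith
  refine HasDerivAt.of_local_left_inverse (f := fun p => p - e * Real.sin p)
    hlip.continuous.continuousAt
    ((hasDerivAt_id (u t)).sub ((Real.hasDerivAt_sin (u t)).const_mul e))
    (one_sub_mul_cos_pos he0 he1 (u t)).ne' (Filter.Eventually.of_forall hu)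

/-- Conformal factor of the spin-orbit Poincaré map: the monodromy matrix
`M(2π)` of the variational equation of the dissipative spin-orbit problem
along any solution has determinant
`exp(-ηπ(3e⁴ + 24e² + 8)/(4(1-e²)^{9/2}))`; in particular this is the
conformal factor `λ` of the spin-orbit Poincaré map. -/
theorem spin_orbit_conformal_factor (a ε η e : ℝ)
    (ha : 0 < a) (he0 : 0 ≤ e) (he1 : e < 1)
    (u : ℝ → ℝ) (humono : StrictMono u)
    (hu : ∀ t, u t - e * Real.sin (u t) = t)
    (r : ℝ → ℝ) (hr : ∀ t, r t = a * (1 - e * Real.cos (u t)))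
    (f : ℝ → ℝ) (hf : ∀ t ∈ Set.Icc (0:ℝ) (2 * π), DifferentiableAt ℝ f t)
    (x y : ℝ → ℝ)
    (hx : ∀ t ∈ Set.Icc (0:ℝ) (2 * π), HasDerivAt x (y t) t)
    (hy : ∀ t ∈ Set.Icc (0:ℝ) (2 * π), HasDerivAt y
      (-ε * (a / r t) ^ 3 * Real.sin (2 * x t - 2 * f t)
        - η * (a / r t) ^ 6 * (y t - deriv f t)) t)
    (A : ℝ → Matrix (Fin 2) (Fin 2) ℝ)
    (hA : ∀ t, A t = !![0, 1;
      -2 * ε * (a / r t) ^ 3 * Real.cos (2 * x t - 2 * f t), -η * (a / r t) ^ 6])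
    (M : ℝ → Matrix (Fin 2) (Fin 2) ℝ)
    (hM0 : M 0 = 1)
    (hM : ∀ t ∈ Set.Icc (0:ℝ) (2 * π), ∀ i j,
      HasDerivAt (fun s => M s i j) ((A t * M t) i j) t) :
    (M (2 * π)).det =
      Real.exp (-η * π * (3 * e ^ 4 + 24 * e ^ 2 + 8) /
        (4 * (1 - e ^ 2) ^ ((9 : ℝ) / 2))) := by
  have hpos : 0 < 1 - e ^ 2 := by nlinarith
  obtain ⟨F, hF, hF0, hF1⟩ := exists_primitive he0 he1
  have hrpow : (1 - e ^ 2) ^ ((9 : ℝ) / 2) = √(1 - e ^ 2) ^ 9 := by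
    rw [Real.sqrt_eq_rpow, ← Real.rpow_natCast (_ ^ _) 9, ← Real.rpow_mul hpos.le]
    norm_num
  rw [hrpow]
  set s := √(1 - e ^ 2) with hs
  have hs0 : 0 < s := Real.sqrt_pos.2 hpos
  have hu0 : u 0 = 0 := kepler_eq_of_eq he0 he1 (by rw [hu]; simp)
  have hu1 : u (2 * π) = 2 * π := kepler_eq_of_eq he0 he1 (by rw [hu]; simp)
  have har : ∀ t, a / r t = (1 - e * Real.cos (u t))⁻¹ := fun t => by
    have := one_sub_mul_cos_pos he0 he1 (u t)
    rw [hr]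
    field_simp
  -- Liouville's formula for the monodromy determinant
  have hD : ∀ t ∈ Set.Icc (0:ℝ) (2 * π),
      HasDerivAt (fun t => (M t).det) (-η * (a / r t) ^ 6 * (M t).det) t := by
    intro t ht
    simp only [Matrix.det_fin_two]
    refine (((hM t ht 0 0).mul (hM t ht 1 1)).sub
      ((hM t ht 0 1).mul (hM t ht 1 0))).congr_deriv ?_
    simp [hA, Matrix.mul_apply, Fin.sum_univ_two]
    ring
  have hG : ∀ t, HasDerivAt (fun t => F (u t) / s ^ 9) ((a / r t) ^ 6) t := by
    intro t
    refine (((hF (u t)).comp t (kepler_hasDerivAt he0 he1 hu t)).div_const (s ^ 9)).congr_deriv ?_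
    have := one_sub_mul_cos_pos he0 he1 (u t)
    rw [har]
    field_simp
  have hconst : ∀ t ∈ Set.Icc (0:ℝ) (2 * π), HasDerivAt
      (fun t => (M t).det * Real.exp (η * (F (u t) / s ^ 9))) 0 t := by
    intro t ht
    refine ((hD t ht).mul ((hG t).const_mul η).exp).congr_deriv ?_
    ring
  have key := constant_of_has_deriv_right_zero
    (fun t ht => (hconst t ht).continuousAt.continuousWithinAt)
    (fun t ht => (hconst t (Set.Ico_subset_Icc_self ht)).hasDerivWithinAt)
    (2 * π) (Set.right_mem_Icc.2 (by positivity))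
  simp only [hu0, hu1, hF0, hF1, hM0, Matrix.det_one, zero_div, mul_zero, Real.exp_zero,
    mul_one] at key
  rw [eq_inv_of_mul_eq_one_left key, ← Real.exp_neg]
  congr 1
  field_simp
end
end
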